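/- Let 0 < r₁ < r₂ and h ≥ 0 be real numbers and let v be a bounded nonnegative C¹ function on the open annulus B_{r₁,r₂} which is a solution of div A(x,Dv) + b(x)|Dv|^α ≥ χ_ω(x)·h in B_{r₁,r₂}, where ω = {x ∈ B_{r₁,r₂} : v(x) > 0} and χ_ω is the characteristic function of ω. If there exists a real number m > 0 such that M(ρ;v) = m for all ρ ∈ (r₁, r₂), then h = 0. -/

import Mathlib

open MeasureTheory Metric Set Filter
open scoped RealInnerProductSpace ENNReal

noncomputable section

abbrev Euc (n : ℕ) := EuclideanSpace ℝ (Fin n)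

/-- Weak solution of `div A(x,Dv) + b(x)|Dv|^α ≥ a(x)` on an open set `U`:
for every nonnegative test function `φ ∈ C₀^∞(U)`,
`-∫ A(x,Dv)·Dφ + ∫ b |Dv|^α φ ≥ ∫ a φ`. -/
def IsWeakSol {n : ℕ} (A : Euc n → Euc n → Euc n) (b : Euc n → ℝ) (α : ℝ)
    (a : Euc n → ℝ) (U : Set (Euc n)) (v : Euc n → ℝ) : Prop :=
  ∀ φ : Euc n → ℝ, ContDiff ℝ (⊤ : ℕ∞) φ → HasCompactSupport φ → tsupport φ ⊆ U →
    (∀ x, 0 ≤ φ x) →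
    (∫ x in U, a x * φ x) ≤
      (-(∫ x in U, ⟪A x (gradient v x), gradient φ x⟫)) +
        ∫ x in U, b x * ‖gradient v x‖ ^ α * φ x

/-- Structural conditions on `A`: measurability, coercivity and growth. -/
def StructCond {n : ℕ} (A : Euc n → Euc n → Euc n) (p C₁ C₂ : ℝ) : Prop :=
  Measurable (Function.uncurry A) ∧
    ∀ x ζ : Euc n, C₁ * ‖ζ‖ ^ p ≤ ⟪ζ, A x ζ⟫ ∧ ‖A x ζ‖ ≤ C₂ * ‖ζ‖ ^ (p - 1)

/-- Locally bounded function on `ℝⁿ`. -/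
def LocBdd {n : ℕ} (b : Euc n → ℝ) : Prop :=
  ∀ K : Set (Euc n), IsCompact K → ∃ C, ∀ x ∈ K, b x ≤ C

/-- `M(r; u) = max_{|x| = r} u x`. -/
def sphMax {n : ℕ} (u : Euc n → ℝ) (r : ℝ) : ℝ := sSup (u '' Metric.sphere (0 : Euc n) r)

/-- `g_θ(t) = inf_{s ∈ (t/θ, θ t)} g s`. -/
def ginf (g : ℝ → ℝ) (θ t : ℝ) : ℝ := sInf (g '' Set.Ioo (t / θ) (θ * t))

/-- The open annulus `{x : r₁ < |x| < r₂}`. -/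
def Ann (n : ℕ) (r₁ r₂ : ℝ) : Set (Euc n) := {x : Euc n | r₁ < ‖x‖ ∧ ‖x‖ < r₂}

/-- `q_σ(r) = ess inf_{r/σ < |x| < σ r} q x`. -/
def qinf {n : ℕ} (q : Euc n → ℝ) (σ r : ℝ) : ℝ :=
  essInf q (volume.restrict (Ann n (r / σ) (σ * r)))

/-- `f_σ(r) = q_σ(r) / (1 + r q_σ(r)^{(α-p+1)/α} ess sup_{r/σ<|x|<σr} b^{(p-1)/α})`. -/
def fdef {n : ℕ} (q b : Euc n → ℝ) (p α σ r : ℝ) : ℝ :=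
  qinf q σ r /
    (1 + r * qinf q σ r ^ ((α - p + 1) / α) *
      essSup (fun x => b x ^ ((p - 1) / α)) (volume.restrict (Ann n (r / σ) (σ * r))))

/-!
Since every sphere maximum equals `m`, a point where `v = m` is a local maximum inside the annulus.
There `Dv = 0`, so `b |Dv| ^ α ≤ h / 2` nearby and, if `h > 0`, the flux `A(x, Dv)` has
distributional divergence at least `c = h / 2` around a local maximum `x₀` of `v`. This is
impossible, and no comparison principle for `A` is needed: the positive part of the gap between `v`
and the barrier `v x₀ - ρ ^ κ + |x - x₀| ^ κ` is supported in the ball of radius `ρ`, and testing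
with its powers bounds its `(j + 1)`-st moment by `(j + 1)! (B / c) ^ j` times its mass, where `B`
comes from the slope of the barrier. As `Dv x₀ = 0`, the gap is at least `ρ ^ κ / 2` on the ball of
radius `ρ ^ κ`, so the moments are also bounded below by a power of `ρ`. With `κ = 2 p / (p - 1)`
the two bounds contradict each other for large `j` as `ρ → 0`.
-/

section Approximation

open scoped Convolution

variable {E : Type*} [NormedAddCommGroup E] [NormedSpace ℝ E] [FiniteDimensional ℝ E]

lemma exists_contDiff_dist_le_dist_fderiv_le {φ : E → ℝ} (hφ : ContDiff ℝ 1 φ)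
    (hc : HasCompactSupport φ) (hφ0 : ∀ x, 0 ≤ φ x) {δ ε : ℝ} (hδ : 0 < δ) (hε : 0 < ε) :
    ∃ ψ : E → ℝ, ContDiff ℝ (⊤ : ℕ∞) ψ ∧ tsupport ψ ⊆ cthickening δ (tsupport φ) ∧
      (∀ x, 0 ≤ ψ x) ∧ (∀ x, dist (ψ x) (φ x) ≤ ε) ∧
      ∀ x, dist (fderiv ℝ ψ x) (fderiv ℝ φ x) ≤ ε := by
  borelize E
  let μ : Measure E := Measure.addHaar
  have hφ' : Continuous (fderiv ℝ φ) := hφ.continuous_fderiv one_ne_zero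
  obtain ⟨δ₁, hδ₁, hφδ⟩ := Metric.uniformContinuous_iff.1
    (hc.uniformContinuous_of_continuous hφ.continuous) ε hε
  obtain ⟨δ₂, hδ₂, hφδ'⟩ := Metric.uniformContinuous_iff.1
    ((hc.fderiv ℝ).uniformContinuous_of_continuous hφ') ε hε
  have hr : 0 < min δ (min δ₁ δ₂) := by positivity
  let β : ContDiffBump (0 : E) := ⟨_, _, half_pos hr, half_lt_self hr⟩
  refine ⟨β.normed μ ⋆[.lsmul ℝ ℝ, μ] φ, ?_, ?_, ?_, ?_, ?_⟩
  · exact β.hasCompactSupport_normed.contDiff_convolution_left _ β.contDiff_normed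
      hφ.continuous.locallyIntegrable
  · refine closure_minimal ((support_convolution_subset _).trans ?_) isClosed_cthickening
    rintro _ ⟨y, hy, z, hz, rfl⟩
    rw [β.support_normed_eq, mem_ball_zero_iff] at hy
    refine mem_cthickening_of_dist_le _ z _ _ (subset_tsupport φ hz) ?_
    rw [dist_eq_norm, add_sub_cancel_right]
    exact hy.le.trans (min_le_left _ _)
  · exact fun x ↦ integral_nonneg fun t ↦ mul_nonneg (β.nonneg_normed t) (hφ0 _)
  · intro x
    refine β.dist_normed_convolution_le hφ.continuous.aestronglyMeasurable fun y hy ↦ ?_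
    exact (hφδ ((mem_ball.1 hy).trans_le ((min_le_right _ _).trans (min_le_left _ _)))).le
  · intro x
    have hderiv : HasFDerivAt (β.normed μ ⋆[.lsmul ℝ ℝ, μ] φ)
        ((β.normed μ ⋆[.lsmul ℝ ℝ, μ] fderiv ℝ φ) x) x :=
      hc.hasFDerivAt_convolution_right _ β.continuous_normed.locallyIntegrable hφ x
    rw [hderiv.fderiv]
    refine β.dist_normed_convolution_le hφ'.aestronglyMeasurable fun y hy ↦ ?_
    exact (hφδ' ((mem_ball.1 hy).trans_le ((min_le_right _ _).trans (min_le_right _ _)))).le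

end Approximation

section Truncation

lemma hasDerivAt_posPart_pow (q : ℕ) (t : ℝ) :
    HasDerivAt (fun t : ℝ ↦ t⁺ ^ (q + 2)) ((q + 2) * t⁺ ^ (q + 1)) t := by
  rcases lt_trichotomy t 0 with ht | rfl | ht
  · have hzero : (fun t : ℝ ↦ t⁺ ^ (q + 2)) =ᶠ[nhds t] fun _ ↦ 0 := by
      filter_upwards [gt_mem_nhds ht] with y hy
      simp [posPart_of_nonpos hy.le]
    simpa [posPart_of_nonpos ht.le] using (hasDerivAt_const t (0 : ℝ)).congr_of_eventuallyEq hzero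
  · have hO : (fun t : ℝ ↦ t⁺ ^ (q + 2)) =O[nhds 0] fun t ↦ t ^ (q + 2) :=
      .of_bound' <| .of_forall fun t ↦ by
        rw [norm_pow, norm_pow, Real.norm_of_nonneg (posPart_nonneg t)]
        gcongr
        exact sup_le (le_abs_self t) (abs_nonneg t)
    rw [hasDerivAt_iff_isLittleO_nhds_zero]
    simpa using hO.trans_isLittleO (Asymptotics.isLittleO_pow_pow (m := 1) (by lia))
  · have hpow : (fun t : ℝ ↦ t⁺ ^ (q + 2)) =ᶠ[nhds t] fun t ↦ t ^ (q + 2) := by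
      filter_upwards [lt_mem_nhds ht] with y hy
      rw [posPart_of_nonneg hy.le]
    simpa [posPart_of_nonneg ht.le] using (hasDerivAt_pow (q + 2) t).congr_of_eventuallyEq hpow

lemma contDiff_posPart_pow (q : ℕ) : ContDiff ℝ 1 fun t : ℝ ↦ t⁺ ^ (q + 2) := by
  rw [contDiff_one_iff_deriv, funext fun t ↦ (hasDerivAt_posPart_pow q t).deriv]
  refine ⟨fun t ↦ (hasDerivAt_posPart_pow q t).differentiableAt, ?_⟩
  simp only [posPart_def]
  fun_prop

variable {E : Type*} {U K : Set E} {w : E → ℝ}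

lemma indicator_posPart_eq_zero_of_notMem (hw0 : ∀ x ∈ U \ K, w x ≤ 0) {x : E} (hx : x ∉ K) :
    U.indicator w⁺ x = 0 := by
  by_cases hxU : x ∈ U
  · rw [indicator_of_mem hxU, Pi.posPart_apply, posPart_of_nonpos (hw0 x ⟨hxU, hx⟩)]
  · exact indicator_of_notMem hxU _

lemma indicator_posPart_nonneg (U : Set E) (w : E → ℝ) (x : E) : 0 ≤ U.indicator w⁺ x :=
  indicator_nonneg (fun y _ ↦ posPart_nonneg (w y)) x

lemma hasCompactSupport_indicator_posPart_pow [TopologicalSpace E] [R1Space E]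
    (hK : IsCompact K) (hw0 : ∀ x ∈ U \ K, w x ≤ 0) (q : ℕ) :
    HasCompactSupport fun x ↦ U.indicator w⁺ x ^ (q + 1) :=
  .intro hK fun x hx ↦ by
    rw [indicator_posPart_eq_zero_of_notMem hw0 hx, zero_pow q.succ_ne_zero]

lemma tsupport_indicator_posPart_pow_subset [TopologicalSpace E] (hK : IsClosed K)
    (hw0 : ∀ x ∈ U \ K, w x ≤ 0) (q : ℕ) :
    tsupport (fun x ↦ U.indicator w⁺ x ^ (q + 1)) ⊆ K :=
  closure_minimal (fun x hx ↦ by_contra fun hxK ↦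
    hx (by simp [indicator_posPart_eq_zero_of_notMem hw0 hxK])) hK

variable [NormedAddCommGroup E] [NormedSpace ℝ E]

lemma contDiff_of_contDiffOn_of_eq_zero {F : Type*} [NormedAddCommGroup F] [NormedSpace ℝ F]
    {n : WithTop ℕ∞} {f : E → F}
    (hf : ContDiffOn ℝ n f U) (hU : IsOpen U) (hK : IsClosed K) (hKU : K ⊆ U)
    (hf0 : ∀ x ∉ K, f x = 0) : ContDiff ℝ n f :=
  contDiff_of_contDiffOn_union_of_isOpen hf (contDiffOn_const.congr hf0)
    (univ_subset_iff.1 (union_compl_self K ▸ union_subset_union_left _ hKU)) hU hK.isOpen_compl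

lemma continuous_indicator_posPart (hw : ContinuousOn w U) (hU : IsOpen U) (hK : IsClosed K)
    (hKU : K ⊆ U) (hw0 : ∀ x ∈ U \ K, w x ≤ 0) : Continuous (U.indicator w⁺) := by
  have hon : ContinuousOn (U.indicator w⁺) U :=
    (hw.sup continuousOn_const).congr fun x hx ↦ indicator_of_mem hx _
  rw [← contDiff_zero (𝕜 := ℝ)]
  exact contDiff_of_contDiffOn_of_eq_zero (contDiffOn_zero.2 hon) hU hK hKU
    fun x ↦ indicator_posPart_eq_zero_of_notMem hw0

lemma contDiff_indicator_posPart_pow (hw : ContDiffOn ℝ 1 w U) (hU : IsOpen U) (hK : IsClosed K)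
    (hKU : K ⊆ U) (hw0 : ∀ x ∈ U \ K, w x ≤ 0) (q : ℕ) :
    ContDiff ℝ 1 fun x ↦ U.indicator w⁺ x ^ (q + 2) := by
  have hon : ContDiffOn ℝ 1 (fun x ↦ U.indicator w⁺ x ^ (q + 2)) U :=
    ((contDiff_posPart_pow q).comp_contDiffOn hw).congr fun x hx ↦ by simp [indicator_of_mem hx]
  exact contDiff_of_contDiffOn_of_eq_zero hon hU hK hKU fun x hx ↦ by
    simp [indicator_posPart_eq_zero_of_notMem hw0 hx]

lemma fderiv_indicator_posPart_pow (hw : DifferentiableOn ℝ w U) (hU : IsOpen U) (q : ℕ) {x : E}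
    (hx : x ∈ U) :
    fderiv ℝ (fun x ↦ U.indicator w⁺ x ^ (q + 2)) x =
      ((q + 2) * U.indicator w⁺ x ^ (q + 1)) • fderiv ℝ w x := by
  have hwx : HasFDerivAt w (fderiv ℝ w x) x :=
    (hw.differentiableAt (hU.mem_nhds hx)).hasFDerivAt
  have heq : (fun x ↦ U.indicator w⁺ x ^ (q + 2)) =ᶠ[nhds x] (fun t : ℝ ↦ t⁺ ^ (q + 2)) ∘ w := by
    filter_upwards [hU.mem_nhds hx] with y hy
    simp [indicator_of_mem hy]
  rw [heq.fderiv_eq, ((hasDerivAt_posPart_pow q (w x)).comp_hasFDerivAt x hwx).fderiv,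
    indicator_of_mem hx, Pi.posPart_apply]

end Truncation

lemma norm_integral_sub_integral_le {α E : Type*} [MeasurableSpace α] {μ : Measure α}
    [NormedAddCommGroup E] [NormedSpace ℝ E] {f g : α → E} {k : α → ℝ} {L : Set α}
    (hf : Integrable f μ) (hg : Integrable g μ) (hk : IntegrableOn k L μ)
    (hL : ∀ x ∉ L, f x = g x) (hfg : ∀ x, ‖f x - g x‖ ≤ k x) :
    ‖(∫ x, f x ∂μ) - ∫ x, g x ∂μ‖ ≤ ∫ x in L, k x ∂μ := by
  rw [← integral_sub hf hg,
    ← setIntegral_eq_integral_of_forall_compl_eq_zero fun x hx ↦ sub_eq_zero.2 (hL x hx)]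
  exact norm_integral_le_of_norm_le hk (.of_forall hfg)

section WeakDivergence

variable {E : Type*} [NormedAddCommGroup E] [NormedSpace ℝ E] [MeasurableSpace E]

/-- The inequality `div F ≥ c` on the set `U` in the sense of distributions, divergence being taken
with respect to the measure `μ`: it is tested against nonnegative smooth functions whose compact
support lies in `U`. -/
def WeakDivGE (μ : Measure E) (F : E → E) (c : ℝ) (U : Set E) : Prop :=
  ∀ φ : E → ℝ, ContDiff ℝ (⊤ : ℕ∞) φ → HasCompactSupport φ → tsupport φ ⊆ U → (∀ x, 0 ≤ φ x) →
    c * ∫ x, φ x ∂μ ≤ -∫ x, fderiv ℝ φ x (F x) ∂μ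

variable {μ : Measure E} {F : E → E} {U V K : Set E} {φ w : E → ℝ} {B c s T : ℝ}

lemma WeakDivGE.mono (h : WeakDivGE μ F c U) (hVU : V ⊆ U) : WeakDivGE μ F c V :=
  fun φ hφ hc hφV ↦ h φ hφ hc (hφV.trans hVU)

variable [BorelSpace E]

lemma integrable_fderiv_apply [SecondCountableTopology E] (hF : LocallyIntegrableOn F U μ)
    (hφ : ContDiff ℝ 1 φ) (hc : HasCompactSupport φ) (hφU : tsupport φ ⊆ U) :
    Integrable (fun x ↦ fderiv ℝ φ x (F x)) μ := by
  have hφ' : Continuous (fderiv ℝ φ) := hφ.continuous_fderiv one_ne_zero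
  obtain ⟨M, hM⟩ := (hc.fderiv ℝ).exists_bound_of_continuous hφ'
  have hsupp : Function.support (fun x ↦ fderiv ℝ φ x (F x)) ⊆ tsupport φ := fun x hx ↦
    support_fderiv_subset ℝ fun h0 ↦ hx (by simp [h0])
  rw [← integrableOn_iff_integrable_of_support_subset hsupp]
  exact (ContinuousLinearMap.id ℝ (E →L[ℝ] ℝ)).integrable_of_bilin_of_bdd_left M
    hφ'.aestronglyMeasurable (.of_forall hM) (hF.integrableOn_compact_subset hφU hc)

variable [IsFiniteMeasureOnCompacts μ]

lemma integrable_indicator_posPart_pow (hw : ContinuousOn w U) (hU : IsOpen U) (hK : IsCompact K)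
    (hKU : K ⊆ U) (hw0 : ∀ x ∈ U \ K, w x ≤ 0) (q : ℕ) :
    Integrable (fun x ↦ U.indicator w⁺ x ^ (q + 1)) μ :=
  ((continuous_indicator_posPart hw hU hK.isClosed hKU hw0).pow
    (q + 1)).integrable_of_hasCompactSupport (hasCompactSupport_indicator_posPart_pow hK hw0 q)

variable [FiniteDimensional ℝ E]

lemma exists_contDiff_abs_integral_sub_le (hU : IsOpen U) (hF : LocallyIntegrableOn F U μ)
    (hφ : ContDiff ℝ 1 φ) (hc : HasCompactSupport φ) (hφU : tsupport φ ⊆ U) (hφ0 : ∀ x, 0 ≤ φ x)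
    {ε : ℝ} (hε : 0 < ε) :
    ∃ ψ : E → ℝ, ContDiff ℝ (⊤ : ℕ∞) ψ ∧ HasCompactSupport ψ ∧ tsupport ψ ⊆ U ∧ (∀ x, 0 ≤ ψ x) ∧
      |(∫ x, φ x ∂μ) - ∫ x, ψ x ∂μ| ≤ ε ∧
      |(∫ x, fderiv ℝ φ x (F x) ∂μ) - ∫ x, fderiv ℝ ψ x (F x) ∂μ| ≤ ε := by
  obtain ⟨δ, hδ, hδU⟩ := hc.exists_cthickening_subset_open hU hφU
  set L := cthickening δ (tsupport φ)
  have hL : IsCompact L := hc.cthickening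
  have hφL : tsupport φ ⊆ L := self_subset_cthickening _
  have hFL : IntegrableOn (fun x ↦ ‖F x‖) L μ := (hF.integrableOn_compact_subset hδU hL).norm
  have hFL0 : 0 ≤ ∫ x in L, ‖F x‖ ∂μ := integral_nonneg fun x ↦ norm_nonneg (F x)
  set D := μ.real L + (∫ x in L, ‖F x‖ ∂μ) + 1
  have hD0 : 0 < D := by positivity
  obtain ⟨ψ, hψ, hψL, hψ0, hψφ, hψφ'⟩ :=
    exists_contDiff_dist_le_dist_fderiv_le hφ hc hφ0 hδ (div_pos hε hD0)
  have hψc : HasCompactSupport ψ := hL.of_isClosed_subset (isClosed_tsupport ψ) hψL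
  have hleε {t : ℝ} (ht : t ≤ D) : ε / D * t ≤ ε :=
    (mul_le_mul_of_nonneg_left ht (by positivity)).trans_eq (div_mul_cancel₀ ε hD0.ne')
  refine ⟨ψ, hψ, hψc, hψL.trans hδU, hψ0, ?_, ?_⟩
  · refine (norm_integral_sub_integral_le (k := fun _ ↦ ε / D)
      (hφ.continuous.integrable_of_hasCompactSupport hc)
      (hψ.continuous.integrable_of_hasCompactSupport hψc) (integrableOn_const hL.measure_ne_top)
      (fun x hx ↦ by rw [image_eq_zero_of_notMem_tsupport fun h ↦ hx (hφL h),
        image_eq_zero_of_notMem_tsupport fun h ↦ hx (hψL h)])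
      fun x ↦ by simpa [← dist_eq_norm, dist_comm] using hψφ x).trans ?_
    rw [setIntegral_const, smul_eq_mul, mul_comm]
    exact hleε (by linarith)
  · refine (norm_integral_sub_integral_le (integrable_fderiv_apply hF hφ hc hφU)
      (integrable_fderiv_apply hF (hψ.of_le (mod_cast le_top)) hψc (hψL.trans hδU))
      (hFL.const_mul (ε / D))
      (fun x hx ↦ by rw [fderiv_of_notMem_tsupport ℝ fun h ↦ hx (hφL h),
        fderiv_of_notMem_tsupport ℝ fun h ↦ hx (hψL h)])
      fun x ↦ by
        rw [← sub_apply]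
        refine ContinuousLinearMap.le_of_opNorm_le _ ?_ _
        simpa [← dist_eq_norm, dist_comm] using hψφ' x).trans ?_
    rw [integral_const_mul]
    exact hleε (by linarith [measureReal_nonneg (μ := μ) (s := L)])

lemma WeakDivGE.le_of_contDiff_one (h : WeakDivGE μ F c U) (hU : IsOpen U)
    (hF : LocallyIntegrableOn F U μ) (hφ : ContDiff ℝ 1 φ) (hc : HasCompactSupport φ)
    (hφU : tsupport φ ⊆ U) (hφ0 : ∀ x, 0 ≤ φ x) :
    c * ∫ x, φ x ∂μ ≤ -∫ x, fderiv ℝ φ x (F x) ∂μ := by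
  refine le_of_forall_pos_le_add fun ε hε ↦ ?_
  obtain ⟨ψ, hψ, hψc, hψU, hψ0, hmass, hflux⟩ :=
    exists_contDiff_abs_integral_sub_le hU hF hφ hc hφU hφ0
      (show 0 < ε / (|c| + 1) by positivity)
  calc c * ∫ x, φ x ∂μ
      = c * ((∫ x, φ x ∂μ) - ∫ x, ψ x ∂μ) + c * ∫ x, ψ x ∂μ := by ring
    _ ≤ |c| * (ε / (|c| + 1)) + -∫ x, fderiv ℝ ψ x (F x) ∂μ := by
        refine add_le_add ((le_abs_self _).trans ?_) (h ψ hψ hψc hψU hψ0)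
        rw [abs_mul]
        gcongr
    _ ≤ |c| * (ε / (|c| + 1)) + (-(∫ x, fderiv ℝ φ x (F x) ∂μ) + ε / (|c| + 1)) := by
        linarith [(abs_le.1 hflux).2]
    _ = -(∫ x, fderiv ℝ φ x (F x) ∂μ) + ε := by
        field_simp
        ring

lemma WeakDivGE.integral_posPart_pow_succ_le (h : WeakDivGE μ F c U) (hU : IsOpen U)
    (hF : LocallyIntegrableOn F U μ) (hK : IsCompact K) (hKU : K ⊆ U) (hw : ContDiffOn ℝ 1 w U)
    (hw0 : ∀ x ∈ U \ K, w x ≤ 0) (hB : ∀ x ∈ U, 0 < w x → -B ≤ fderiv ℝ w x (F x)) (q : ℕ) :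
    c * ∫ x, U.indicator w⁺ x ^ (q + 2) ∂μ ≤
      (q + 2) * B * ∫ x, U.indicator w⁺ x ^ (q + 1) ∂μ := by
  have hφ : ContDiff ℝ 1 fun x ↦ U.indicator w⁺ x ^ (q + 2) :=
    contDiff_indicator_posPart_pow hw hU hK.isClosed hKU hw0 q
  have hc : HasCompactSupport fun x ↦ U.indicator w⁺ x ^ (q + 2) :=
    hasCompactSupport_indicator_posPart_pow hK hw0 (q + 1)
  have hφU : tsupport (fun x ↦ U.indicator w⁺ x ^ (q + 2)) ⊆ U :=
    (tsupport_indicator_posPart_pow_subset hK.isClosed hw0 (q + 1)).trans hKU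
  refine (h.le_of_contDiff_one hU hF hφ hc hφU fun x ↦
    pow_nonneg (indicator_posPart_nonneg U w x) _).trans ?_
  rw [← integral_neg, ← integral_const_mul]
  refine integral_mono (integrable_fderiv_apply hF hφ hc hφU).neg
    ((integrable_indicator_posPart_pow hw.continuousOn hU hK hKU hw0 q).const_mul _) fun x ↦ ?_
  dsimp only
  rcases (indicator_posPart_nonneg U w x).eq_or_lt' with hux | hux
  · have hmin : IsLocalMin (fun x ↦ U.indicator w⁺ x ^ (q + 2)) x := .of_forall fun y ↦ by
      simpa [hux] using pow_nonneg (indicator_posPart_nonneg U w y) (q + 2)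
    simp [hmin.fderiv_eq_zero, hux]
  · have hxU : x ∈ U := mem_of_indicator_ne_zero hux.ne'
    have hwx : 0 < w x := by simpa [indicator_of_mem hxU] using hux
    rw [fderiv_indicator_posPart_pow (hw.differentiableOn one_ne_zero) hU q hxU, smul_apply,
      smul_eq_mul]
    nlinarith [mul_le_mul_of_nonneg_left (hB x hxU hwx)
      (show 0 ≤ (q + 2) * U.indicator w⁺ x ^ (q + 1) by positivity)]

lemma WeakDivGE.integral_posPart_pow_le (h : WeakDivGE μ F c U) (hc : 0 < c) (hU : IsOpen U)
    (hF : LocallyIntegrableOn F U μ) (hK : IsCompact K) (hKU : K ⊆ U) (hw : ContDiffOn ℝ 1 w U)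
    (hw0 : ∀ x ∈ U \ K, w x ≤ 0) (hB0 : 0 ≤ B)
    (hB : ∀ x ∈ U, 0 < w x → -B ≤ fderiv ℝ w x (F x)) (j : ℕ) :
    ∫ x, U.indicator w⁺ x ^ (j + 1) ∂μ ≤
      (j + 1).factorial * (B / c) ^ j * ∫ x, U.indicator w⁺ x ∂μ := by
  induction j with
  | zero => simp
  | succ j ih =>
    have hstep : ∫ x, U.indicator w⁺ x ^ (j + 2) ∂μ ≤
        (j + 2) * (B / c) * ∫ x, U.indicator w⁺ x ^ (j + 1) ∂μ := by
      rw [← mul_le_mul_iff_right₀ hc]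
      refine (h.integral_posPart_pow_succ_le hU hF hK hKU hw hw0 hB j).trans_eq ?_
      field_simp
    refine hstep.trans ((mul_le_mul_of_nonneg_left ih (by positivity)).trans_eq ?_)
    push_cast [Nat.factorial_succ]
    ring

lemma WeakDivGE.pow_mul_measureReal_le (h : WeakDivGE μ F c U) (hc : 0 < c) (hU : IsOpen U)
    (hF : LocallyIntegrableOn F U μ) (hK : IsCompact K) (hKU : K ⊆ U) (hw : ContDiffOn ℝ 1 w U)
    (hw0 : ∀ x ∈ U \ K, w x ≤ 0) (hB0 : 0 ≤ B)
    (hB : ∀ x ∈ U, 0 < w x → -B ≤ fderiv ℝ w x (F x)) (hs : 0 ≤ s) (hws : ∀ x ∈ K, w x ≤ s)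
    (hT : 0 < T) {S : Set E} (hSU : S ⊆ U) (hwT : ∀ x ∈ S, T ≤ w x) (j : ℕ) :
    T ^ (j + 1) * μ.real S ≤ (j + 1).factorial * (B / c) ^ j * (s * μ.real K) := by
  let u := U.indicator w⁺
  have hupper : ∫ x, u x ∂μ ≤ s * μ.real K := by
    rw [← setIntegral_eq_integral_of_forall_compl_eq_zero
      fun x hx ↦ indicator_posPart_eq_zero_of_notMem hw0 hx]
    refine (Real.le_norm_self _).trans
      (norm_setIntegral_le_of_norm_le_const hK.measure_lt_top fun x hx ↦ ?_)
    rw [indicator_of_mem (hKU hx), Pi.posPart_apply, Real.norm_of_nonneg (posPart_nonneg _)]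
    exact sup_le (hws x hx) hs
  have hlower : T ^ (j + 1) * μ.real S ≤ ∫ x, u x ^ (j + 1) ∂μ := by
    have hu : Integrable (fun x ↦ u x ^ (j + 1)) μ :=
      integrable_indicator_posPart_pow hw.continuousOn hU hK hKU hw0 j
    have hu0 (x) : 0 ≤ u x ^ (j + 1) := pow_nonneg (indicator_posPart_nonneg U w x) _
    refine le_trans ?_ (mul_meas_ge_le_integral_of_nonneg (.of_forall hu0) hu (T ^ (j + 1)))
    refine mul_le_mul_of_nonneg_left (measureReal_mono (fun x hx ↦ ?_)
      (hu.measure_ge_lt_top (by positivity)).ne) (by positivity)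
    have hTu : T ≤ u x := by
      simpa only [u, indicator_of_mem (hSU hx), Pi.posPart_apply] using
        (hwT x hx).trans (le_posPart (w x))
    exact pow_le_pow_left₀ hT.le hTu _
  refine hlower.trans ((h.integral_posPart_pow_le hc hU hF hK hKU hw hw0 hB0 hB j).trans ?_)
  gcongr

end WeakDivergence

lemma not_eventually_rpow_le_mul_rpow {a b C : ℝ} (hab : a < b) :
    ¬∀ᶠ t in nhdsWithin (0 : ℝ) (Ioi 0), t ^ a ≤ C * t ^ b := by
  intro h
  have hlim : Tendsto (fun t : ℝ ↦ C * t ^ (b - a)) (nhdsWithin 0 (Ioi 0)) (nhds 0) := by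
    have hcont := (Real.continuousAt_rpow_const 0 (b - a) (.inr (sub_nonneg.2 hab.le))).const_mul C
    simpa [Real.zero_rpow (sub_pos.2 hab).ne'] using hcont.tendsto.mono_left nhdsWithin_le_nhds
  refine (ge_of_tendsto hlim ?_).not_gt one_pos
  filter_upwards [h, self_mem_nhdsWithin] with t ht (ht0 : 0 < t)
  rw [Real.rpow_sub ht0, mul_div_assoc', le_div_iff₀ (by positivity), one_mul]
  exact ht

section Barrier

variable {E : Type*} [NormedAddCommGroup E]

/-- `F` has the growth of a `p`-Laplacian flux of `v` on `U`: it is coercive and grows at most like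
`|Dv|^(p-1)`, with constants `C₁` and `C₂`. The differential `Dv` is kept as a covector. -/
structure HasPGrowthOn [NormedSpace ℝ E] (F : E → E) (v : E → ℝ) (p C₁ C₂ : ℝ) (U : Set E) :
    Prop where
  le_apply : ∀ x ∈ U, C₁ * ‖fderiv ℝ v x‖ ^ p ≤ fderiv ℝ v x (F x)
  norm_le : ∀ x ∈ U, ‖F x‖ ≤ C₂ * ‖fderiv ℝ v x‖ ^ (p - 1)

lemma HasPGrowthOn.mono [NormedSpace ℝ E] {F : E → E} {v : E → ℝ} {p C₁ C₂ : ℝ} {U V : Set E}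
    (h : HasPGrowthOn F v p C₁ C₂ U) (hVU : V ⊆ U) : HasPGrowthOn F v p C₁ C₂ V :=
  ⟨fun x hx ↦ h.le_apply x (hVU hx), fun x hx ↦ h.norm_le x (hVU hx)⟩

-- Either `‖ℓ‖` dominates `‖g‖` and coercivity absorbs `g a`, or growth bounds `g a` by `‖g‖ ^ p`.
lemma apply_sub_apply_le_of_coercive [NormedSpace ℝ E] {ℓ g : E →L[ℝ] ℝ} {a : E} {p C₁ C₂ : ℝ}
    (hp : 1 ≤ p) (hC₁ : 0 < C₁) (hC₂ : 0 ≤ C₂) (hcoer : C₁ * ‖ℓ‖ ^ p ≤ ℓ a)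
    (hgrow : ‖a‖ ≤ C₂ * ‖ℓ‖ ^ (p - 1)) :
    g a - ℓ a ≤ C₂ * (C₂ / C₁) ^ (p - 1) * ‖g‖ ^ p := by
  have hpow {t : ℝ} (ht : 0 ≤ t) : t ^ p = t * t ^ (p - 1) := by
    rw [← Real.rpow_one_add' ht (by linarith), add_sub_cancel]
  have hga : g a ≤ ‖g‖ * (C₂ * ‖ℓ‖ ^ (p - 1)) :=
    (Real.le_norm_self _).trans (g.le_opNorm_of_le hgrow)
  rcases le_total (C₂ / C₁ * ‖g‖) ‖ℓ‖ with hgℓ | hℓg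
  · have hℓ : ‖g‖ * (C₂ * ‖ℓ‖ ^ (p - 1)) ≤ C₁ * ‖ℓ‖ ^ p := by
      rw [div_mul_eq_mul_div, div_le_iff₀ hC₁] at hgℓ
      calc ‖g‖ * (C₂ * ‖ℓ‖ ^ (p - 1)) = C₂ * ‖g‖ * ‖ℓ‖ ^ (p - 1) := by ring
        _ ≤ ‖ℓ‖ * C₁ * ‖ℓ‖ ^ (p - 1) := by gcongr
        _ = C₁ * ‖ℓ‖ ^ p := by rw [hpow (norm_nonneg ℓ)]; ring
    exact (sub_nonpos.2 (hga.trans (hℓ.trans hcoer))).trans (by positivity)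
  · have hℓ0 : 0 ≤ ℓ a := hcoer.trans' (by positivity)
    calc g a - ℓ a ≤ ‖g‖ * (C₂ * ‖ℓ‖ ^ (p - 1)) := by linarith
      _ ≤ ‖g‖ * (C₂ * (C₂ / C₁ * ‖g‖) ^ (p - 1)) := by gcongr
      _ = C₂ * (C₂ / C₁) ^ (p - 1) * ‖g‖ ^ p := by
        rw [Real.mul_rpow (by positivity) (norm_nonneg g), hpow (norm_nonneg g)]
        ring

/-- The difference between `v` and the radial barrier `v x₀ - ρ ^ κ + |x - x₀| ^ κ`. If `v` is
maximal at `x₀`, it is positive only within distance `ρ` of `x₀`. -/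
def barrierGap (v : E → ℝ) (x₀ : E) (κ ρ : ℝ) (x : E) : ℝ :=
  v x - (v x₀ - ρ ^ κ + ‖x - x₀‖ ^ κ)

variable {U : Set E} {F : E → E} {v : E → ℝ} {x x₀ : E} {p C₁ C₂ c κ ρ : ℝ}

lemma barrierGap_le (hv : v x ≤ v x₀) : barrierGap v x₀ κ ρ x ≤ ρ ^ κ := by
  have := Real.rpow_nonneg (norm_nonneg (x - x₀)) κ
  unfold barrierGap
  linarith

lemma norm_sub_lt_of_barrierGap_pos (hκ : 0 < κ) (hρ : 0 ≤ ρ) (hv : v x ≤ v x₀)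
    (hgap : 0 < barrierGap v x₀ κ ρ x) : ‖x - x₀‖ < ρ := by
  unfold barrierGap at hgap
  exact (Real.rpow_lt_rpow_iff (norm_nonneg _) hρ hκ).1 (by linarith)

variable [InnerProductSpace ℝ E]

lemma contDiffOn_barrierGap (hv : ContDiffOn ℝ 1 v U) (hκ : 1 < κ) :
    ContDiffOn ℝ 1 (barrierGap v x₀ κ ρ) U :=
  hv.sub (contDiff_const.add ((contDiff_id.sub contDiff_const).norm_rpow hκ)).contDiffOn

lemma norm_fderiv_norm_sub_rpow (x x₀ : E) (hκ : 1 < κ) :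
    ‖fderiv ℝ (fun y ↦ ‖y - x₀‖ ^ κ) x‖ = κ * ‖x - x₀‖ ^ (κ - 1) := by
  rw [fderiv_comp_sub (f := fun y ↦ ‖y‖ ^ κ), norm_fderiv_norm_id_rpow _ hκ]

lemma fderiv_barrierGap (hv : DifferentiableAt ℝ v x) (hκ : 1 < κ) :
    fderiv ℝ (barrierGap v x₀ κ ρ) x = fderiv ℝ v x - fderiv ℝ (fun y ↦ ‖y - x₀‖ ^ κ) x := by
  have hκ' : DifferentiableAt ℝ (fun y ↦ ‖y - x₀‖ ^ κ) x :=
    (differentiable_id.sub_const x₀).norm_rpow hκ x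
  unfold barrierGap
  rw [fderiv_fun_sub hv (hκ'.const_add _), fderiv_const_add]

lemma HasPGrowthOn.neg_le_fderiv_barrierGap (h : HasPGrowthOn F v p C₁ C₂ U) (hp : 1 ≤ p)
    (hC₁ : 0 < C₁) (hC₂ : 0 ≤ C₂) (hκ : 1 < κ) (hv : DifferentiableAt ℝ v x) (hx : x ∈ U)
    (hxρ : ‖x - x₀‖ ≤ ρ) :
    -(C₂ * (C₂ / C₁) ^ (p - 1) * (κ * ρ ^ (κ - 1)) ^ p) ≤
      fderiv ℝ (barrierGap v x₀ κ ρ) x (F x) := by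
  rw [fderiv_barrierGap hv hκ, sub_apply, neg_le, neg_sub]
  refine (apply_sub_apply_le_of_coercive hp hC₁ hC₂ (h.le_apply x hx) (h.norm_le x hx)).trans ?_
  rw [norm_fderiv_norm_sub_rpow x x₀ hκ]
  gcongr

lemma eventually_sub_add_norm_sub_rpow_le (hmax : IsLocalMax v x₀) (hv : DifferentiableAt ℝ v x₀)
    (hκ : 1 < κ) : ∀ᶠ x in nhds x₀, v x₀ - v x + ‖x - x₀‖ ^ κ ≤ ‖x - x₀‖ / 2 := by
  have hv' : HasFDerivAt v 0 x₀ := hmax.fderiv_eq_zero ▸ hv.hasFDerivAt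
  have hnorm : HasFDerivAt (fun x ↦ ‖x - x₀‖ ^ κ) (0 : E →L[ℝ] ℝ) x₀ := by
    have hzero : fderiv ℝ (fun x ↦ ‖x - x₀‖ ^ κ) x₀ = 0 := norm_eq_zero.1 <| by
      rw [norm_fderiv_norm_sub_rpow x₀ x₀ hκ, sub_self, norm_zero,
        Real.zero_rpow (sub_pos.2 hκ).ne', mul_zero]
    exact hzero ▸ ((differentiable_id.sub_const x₀).norm_rpow hκ x₀).hasFDerivAt
  have hgap := (hnorm.sub hv').isLittleO.def (c := 1 / 2) (by positivity)
  filter_upwards [hgap] with x hx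
  have hx' := (Real.le_norm_self _).trans hx
  simp only [Pi.sub_apply, sub_self, norm_zero, Real.zero_rpow (by positivity : κ ≠ 0),
    zero_apply, sub_zero] at hx'
  linarith

variable [FiniteDimensional ℝ E] [MeasurableSpace E] [BorelSpace E] {μ : Measure E}

lemma WeakDivGE.pow_mul_measureReal_closedBall_le [IsFiniteMeasureOnCompacts μ]
    (h : WeakDivGE μ F c U) (hc : 0 < c)
    (hU : IsOpen U) (hF : LocallyIntegrableOn F U μ) (hFv : HasPGrowthOn F v p C₁ C₂ U)
    (hp : 1 ≤ p) (hC₁ : 0 < C₁) (hC₂ : 0 ≤ C₂) (hv : ContDiffOn ℝ 1 v U)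
    (hmax : ∀ x ∈ U, v x ≤ v x₀) (hκ : 1 < κ) (hρ0 : 0 < ρ) (hρ1 : ρ ≤ 1)
    (hρU : closedBall x₀ ρ ⊆ U)
    (hflat : ∀ x ∈ closedBall x₀ ρ, v x₀ - v x + ‖x - x₀‖ ^ κ ≤ ‖x - x₀‖ / 2) (j : ℕ) :
    (ρ ^ κ / 2) ^ (j + 1) * μ.real (closedBall x₀ (ρ ^ κ)) ≤
      (j + 1).factorial * (C₂ * (C₂ / C₁) ^ (p - 1) * (κ * ρ ^ (κ - 1)) ^ p / c) ^ j *
        (ρ ^ κ * μ.real (closedBall x₀ ρ)) := by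
  have hsρ : closedBall x₀ (ρ ^ κ) ⊆ closedBall x₀ ρ :=
    closedBall_subset_closedBall (Real.rpow_le_self_of_le_one hρ0.le hρ1 hκ.le)
  refine h.pow_mul_measureReal_le (w := barrierGap v x₀ κ ρ) hc hU hF (isCompact_closedBall x₀ ρ)
    hρU (contDiffOn_barrierGap hv hκ) ?_ (by positivity) ?_ (by positivity) ?_ (by positivity)
    (hsρ.trans hρU) ?_ j
  · rintro x ⟨hxU, hxρ⟩
    contrapose! hxρ
    rw [mem_closedBall_iff_norm]
    exact (norm_sub_lt_of_barrierGap_pos (by positivity) hρ0.le (hmax x hxU) hxρ).le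
  · exact fun x hxU hgap ↦ hFv.neg_le_fderiv_barrierGap hp hC₁ hC₂ hκ
      ((hv.differentiableOn one_ne_zero).differentiableAt (hU.mem_nhds hxU)) hxU
      (norm_sub_lt_of_barrierGap_pos (by positivity) hρ0.le (hmax x hxU) hgap).le
  · exact fun x hx ↦ barrierGap_le (hmax x (hρU hx))
  · intro x hx
    have hxs := mem_closedBall_iff_norm.1 hx
    have hxflat := hflat x (hsρ hx)
    unfold barrierGap
    linarith

lemma WeakDivGE.rpow_pow_finrank_le [μ.IsAddHaarMeasure]
    (h : WeakDivGE μ F c U) (hc : 0 < c)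
    (hU : IsOpen U) (hF : LocallyIntegrableOn F U μ) (hFv : HasPGrowthOn F v p C₁ C₂ U)
    (hp : 1 ≤ p) (hC₁ : 0 < C₁) (hC₂ : 0 ≤ C₂) (hv : ContDiffOn ℝ 1 v U)
    (hmax : ∀ x ∈ U, v x ≤ v x₀) (hκ : 1 < κ) (hκp : (κ - 1) * p = κ + p) (hρ0 : 0 < ρ)
    (hρ1 : ρ ≤ 1) (hρU : closedBall x₀ ρ ⊆ U)
    (hflat : ∀ x ∈ closedBall x₀ ρ, v x₀ - v x + ‖x - x₀‖ ^ κ ≤ ‖x - x₀‖ / 2) (j : ℕ) :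
    (ρ ^ κ) ^ Module.finrank ℝ E ≤
      2 ^ (j + 1) * (j + 1).factorial * (C₂ * (C₂ / C₁) ^ (p - 1) * κ ^ p / c) ^ j *
        (ρ ^ p) ^ j := by
  have hflux : (κ * ρ ^ (κ - 1)) ^ p = κ ^ p * (ρ ^ κ * ρ ^ p) := by
    rw [Real.mul_rpow (by positivity) (by positivity), ← Real.rpow_mul hρ0.le, hκp,
      Real.rpow_add hρ0]
  have hball : 0 < μ.real (ball (0 : E) 1) := by
    rw [measureReal_def]
    exact ENNReal.toReal_pos (measure_ball_pos μ 0 one_pos).ne' measure_ball_lt_top.ne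
  have hest := h.pow_mul_measureReal_closedBall_le hc hU hF hFv hp hC₁ hC₂ hv hmax hκ hρ0 hρ1
    hρU hflat j
  rw [Measure.addHaar_real_closedBall μ x₀ (by positivity),
    Measure.addHaar_real_closedBall μ x₀ hρ0.le, hflux] at hest
  have hs : 0 < ρ ^ κ := by positivity
  have hρN : ρ ^ Module.finrank ℝ E ≤ 1 := pow_le_one₀ hρ0.le hρ1
  set s := ρ ^ κ
  set D := C₂ * (C₂ / C₁) ^ (p - 1)
  set N := Module.finrank ℝ E
  set V := μ.real (ball (0 : E) 1)
  refine le_of_mul_le_mul_left (a := (s / 2) ^ (j + 1) * V) ?_ (by positivity)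
  calc (s / 2) ^ (j + 1) * V * s ^ N
      = (s / 2) ^ (j + 1) * (s ^ N * V) := by ring
    _ ≤ (j + 1).factorial * (D * (κ ^ p * (s * ρ ^ p)) / c) ^ j * (s * (1 * V)) := by
        refine hest.trans ?_
        gcongr
    _ = (s / 2) ^ (j + 1) * V *
          (2 ^ (j + 1) * (j + 1).factorial * (D * κ ^ p / c) ^ j * (ρ ^ p) ^ j) := by
        simp only [mul_pow, div_pow]
        field_simp
        ring

theorem WeakDivGE.not_isLocalMax [μ.IsAddHaarMeasure] (h : WeakDivGE μ F c U) (hc : 0 < c)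
    (hU : IsOpen U) (hF : LocallyIntegrableOn F U μ) (hFv : HasPGrowthOn F v p C₁ C₂ U)
    (hp : 1 < p) (hC₁ : 0 < C₁) (hC₂ : 0 ≤ C₂) (hv : ContDiffOn ℝ 1 v U) (hx₀ : x₀ ∈ U) :
    ¬IsLocalMax v x₀ := by
  intro hmax
  have hp1 : 0 < p - 1 := sub_pos.2 hp
  -- The exponent is chosen so that the flux of the barrier, of size
  -- `ρ ^ ((κ - 1) * p) = ρ ^ κ * ρ ^ p`, is smaller than its height `ρ ^ κ` by a factor `ρ ^ p`.
  set κ := 2 * p / (p - 1) with hκ_def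
  have hκ : 1 < κ := by
    rw [hκ_def, one_lt_div hp1]
    linarith
  have hκp : (κ - 1) * p = κ + p := by
    rw [hκ_def]
    field_simp
    ring
  have hflat := eventually_sub_add_norm_sub_rpow_le hmax
    ((hv.differentiableOn one_ne_zero).differentiableAt (hU.mem_nhds hx₀)) hκ
  obtain ⟨r, hr, hball⟩ := Metric.eventually_nhds_iff_ball.1 <|
    (hU.eventually_mem hx₀).and (Filter.Eventually.and hmax hflat)
  have hrU : ball x₀ r ⊆ U := fun x hx ↦ (hball x hx).1
  obtain ⟨j, hj⟩ := exists_nat_gt (κ * Module.finrank ℝ E / p)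
  rw [div_lt_iff₀' (by positivity)] at hj
  refine not_eventually_rpow_le_mul_rpow hj
    (C := 2 ^ (j + 1) * (j + 1).factorial * (C₂ * (C₂ / C₁) ^ (p - 1) * κ ^ p / c) ^ j) ?_
  filter_upwards [Ioo_mem_nhdsGT (lt_min hr one_pos)] with ρ ⟨hρ0, hρr⟩
  have hρ : closedBall x₀ ρ ⊆ ball x₀ r :=
    closedBall_subset_ball (hρr.trans_le (min_le_left _ _))
  rw [Real.rpow_mul_natCast hρ0.le, Real.rpow_mul_natCast hρ0.le]
  exact (h.mono hrU).rpow_pow_finrank_le hc isOpen_ball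
    (hF.mono_set hrU) (hFv.mono hrU) hp.le hC₁ hC₂ (hv.mono hrU)
    (fun x hx ↦ (hball x hx).2.1) hκ hκp hρ0 (hρr.le.trans (min_le_right _ _)) hρ
    (fun x hx ↦ (hball x (hρ hx)).2.2) j

end Barrier

section DivergenceForm

variable {n : ℕ} {A : Euc n → Euc n → Euc n} {b a v : Euc n → ℝ} {p C₁ C₂ α h h' : ℝ}
  {U V : Set (Euc n)} {x₀ : Euc n}

lemma norm_gradient (v : Euc n → ℝ) (x : Euc n) : ‖gradient v x‖ = ‖fderiv ℝ v x‖ :=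
  (InnerProductSpace.toDual ℝ (Euc n)).symm.norm_map _

lemma measurable_gradient (v : Euc n → ℝ) : Measurable (gradient v) :=
  (InnerProductSpace.toDual ℝ (Euc n)).symm.continuous.measurable.comp (measurable_fderiv ℝ v)

lemma StructCond.hasPGrowthOn (hA : StructCond A p C₁ C₂) (v : Euc n → ℝ) (U : Set (Euc n)) :
    HasPGrowthOn (fun x ↦ A x (gradient v x)) v p C₁ C₂ U where
  le_apply x _ := by
    simpa only [norm_gradient, inner_gradient_left] using (hA.2 x (gradient v x)).1
  norm_le x _ := by simpa only [norm_gradient] using (hA.2 x (gradient v x)).2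

lemma StructCond.locallyIntegrableOn (hA : StructCond A p C₁ C₂) (hp : 1 ≤ p) (hU : IsOpen U)
    (hv : ContDiffOn ℝ 1 v U) : LocallyIntegrableOn (fun x ↦ A x (gradient v x)) U := by
  have hbound : ContinuousOn (fun x ↦ C₂ * ‖fderiv ℝ v x‖ ^ (p - 1)) U :=
    ((hv.continuousOn_fderiv_of_isOpen hU le_rfl).norm.rpow_const
      fun _ _ ↦ .inr (sub_nonneg.2 hp)).const_mul C₂
  refine (hbound.locallyIntegrableOn hU.measurableSet).mono
    (hA.1.comp (measurable_id.prodMk (measurable_gradient v))).aestronglyMeasurable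
    (.of_forall fun x ↦ ?_)
  exact ((hA.hasPGrowthOn v univ).norm_le x (mem_univ x)).trans (Real.le_norm_self _)

lemma setIntegral_mul_norm_gradient_rpow_mul_le {φ : Euc n → ℝ} (hbm : Measurable b)
    (hb0 : ∀ x, 0 ≤ b x) (hb : ∀ x ∈ V, b x * ‖gradient v x‖ ^ α ≤ h') (hφ : Continuous φ)
    (hφint : Integrable φ) (hφV : Function.support φ ⊆ V) (hφ0 : ∀ x, 0 ≤ φ x)
    (U : Set (Euc n)) :
    ∫ x in U, b x * ‖gradient v x‖ ^ α * φ x ≤ h' * ∫ x, φ x := by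
  have hnonneg (x) : 0 ≤ b x * ‖gradient v x‖ ^ α * φ x := by
    have := hb0 x
    have := hφ0 x
    positivity
  have hle (x) : b x * ‖gradient v x‖ ^ α * φ x ≤ h' * φ x := by
    by_cases hx : x ∈ V
    · exact mul_le_mul_of_nonneg_right (hb x hx) (hφ0 x)
    · rw [Function.notMem_support.1 fun hxφ ↦ hx (hφV hxφ), mul_zero, mul_zero]
  have hmeas : Measurable fun x ↦ b x * ‖gradient v x‖ ^ α * φ x :=
    (hbm.mul ((measurable_gradient v).norm.pow_const α)).mul hφ.measurable
  have hint : Integrable fun x ↦ b x * ‖gradient v x‖ ^ α * φ x :=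
    (hφint.const_mul h').mono' hmeas.aestronglyMeasurable
      (.of_forall fun x ↦ by rw [Real.norm_of_nonneg (hnonneg x)]; exact hle x)
  rw [← integral_const_mul]
  exact (setIntegral_le_integral hint (.of_forall hnonneg)).trans
    (integral_mono hint (hφint.const_mul h') hle)

lemma IsWeakSol.weakDivGE (hsol : IsWeakSol A b α a U v) (hVU : V ⊆ U) (hbm : Measurable b)
    (hb0 : ∀ x, 0 ≤ b x) (ha : ∀ x ∈ V, a x = h)
    (hb : ∀ x ∈ V, b x * ‖gradient v x‖ ^ α ≤ h') :
    WeakDivGE volume (fun x ↦ A x (gradient v x)) (h - h') V := by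
  intro φ hφ hc hφV hφ0
  have hoff {x : Euc n} (hx : x ∉ V) : φ x = 0 :=
    image_eq_zero_of_notMem_tsupport fun hxφ ↦ hx (hφV hxφ)
  have hsource : ∫ x in U, a x * φ x = h * ∫ x, φ x := by
    rw [setIntegral_eq_integral_of_forall_compl_eq_zero
      fun x hx ↦ by rw [hoff fun hxV ↦ hx (hVU hxV), mul_zero], ← integral_const_mul]
    congr with x
    by_cases hx : x ∈ V
    · rw [ha x hx]
    · rw [hoff hx, mul_zero, mul_zero]
  have hflux : ∫ x in U, ⟪A x (gradient v x), gradient φ x⟫ =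
      ∫ x, fderiv ℝ φ x (A x (gradient v x)) := by
    simp only [inner_gradient_right, conj_trivial]
    refine setIntegral_eq_integral_of_forall_compl_eq_zero fun x hx ↦ ?_
    rw [fderiv_of_notMem_tsupport ℝ fun hxφ ↦ hx (hVU (hφV hxφ)), zero_apply]
  have hgrad : ∫ x in U, b x * ‖gradient v x‖ ^ α * φ x ≤ h' * ∫ x, φ x :=
    setIntegral_mul_norm_gradient_rpow_mul_le hbm hb0 hb hφ.continuous
      (hφ.continuous.integrable_of_hasCompactSupport hc) ((subset_tsupport φ).trans hφV) hφ0 U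
  have hweak := hsol φ hφ hc (hφV.trans hVU) hφ0
  rw [hsource, hflux] at hweak
  linarith

lemma eventually_mul_norm_gradient_rpow_le (hbloc : LocBdd b) (hα : 0 < α)
    (hv : ContinuousAt (fderiv ℝ v) x₀) (hv0 : fderiv ℝ v x₀ = 0) (hh' : 0 < h') :
    ∀ᶠ x in nhds x₀, b x * ‖gradient v x‖ ^ α ≤ h' := by
  obtain ⟨C, hC⟩ := hbloc _ (isCompact_closedBall x₀ 1)
  have hlim : Tendsto (fun x ↦ C * ‖gradient v x‖ ^ α) (nhds x₀) (nhds 0) := by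
    simpa [norm_gradient, hv0, Real.zero_rpow hα.ne'] using
      ((hv.norm.rpow_const (.inr hα.le)).const_mul C).tendsto
  filter_upwards [closedBall_mem_nhds x₀ one_pos, hlim.eventually_le_const hh'] with x hx hxC
  exact (mul_le_mul_of_nonneg_right (hC x hx) (by positivity)).trans hxC

lemma IsWeakSol.nonpos_of_isLocalMax (hsol : IsWeakSol A b α a U v) (hA : StructCond A p C₁ C₂)
    (hp : 1 < p) (hC₁ : 0 < C₁) (hC₂ : 0 ≤ C₂) (hα : 0 < α) (hbm : Measurable b)
    (hb0 : ∀ x, 0 ≤ b x) (hbloc : LocBdd b) (hU : IsOpen U) (hv : ContDiffOn ℝ 1 v U)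
    (hx₀ : x₀ ∈ U) (hmax : IsLocalMax v x₀) (ha : ∀ᶠ x in nhds x₀, a x = h) : h ≤ 0 := by
  by_contra! hh
  have hsmall : ∀ᶠ x in nhds x₀, b x * ‖gradient v x‖ ^ α ≤ h / 2 :=
    eventually_mul_norm_gradient_rpow_le hbloc hα
      ((hv.continuousOn_fderiv_of_isOpen hU le_rfl).continuousAt (hU.mem_nhds hx₀))
      hmax.fderiv_eq_zero (half_pos hh)
  obtain ⟨V, hV, hVo, hxV⟩ :=
    _root_.eventually_nhds_iff.1 ((hU.eventually_mem hx₀).and (ha.and hsmall))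
  have hVU : V ⊆ U := fun x hx ↦ (hV x hx).1
  have hdiv := hsol.weakDivGE hVU hbm hb0 (fun x hx ↦ (hV x hx).2.1) fun x hx ↦ (hV x hx).2.2
  exact hdiv.not_isLocalMax (by linarith) hVo (hA.locallyIntegrableOn hp.le hVo (hv.mono hVU))
    (hA.hasPGrowthOn v V) hp hC₁ hC₂ (hv.mono hVU) hxV hmax

end DivergenceForm

section Sphere

variable {n : ℕ} {v : Euc n → ℝ} {r₁ r₂ m : ℝ}

lemma isOpen_Ann (n : ℕ) (r₁ r₂ : ℝ) : IsOpen (Ann n r₁ r₂) :=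
  (isOpen_lt continuous_const continuous_norm).inter (isOpen_lt continuous_norm continuous_const)

lemma le_sphMax {x : Euc n} (hv : ContinuousOn v (sphere 0 ‖x‖)) : v x ≤ sphMax v ‖x‖ :=
  le_csSup ((isCompact_sphere 0 ‖x‖).bddAbove_image hv)
    (mem_image_of_mem v (mem_sphere_zero_iff_norm.2 rfl))

lemma exists_norm_eq_and_eq_sphMax [NeZero n] {ρ : ℝ} (hρ : 0 ≤ ρ)
    (hv : ContinuousOn v (sphere 0 ρ)) : ∃ x, ‖x‖ = ρ ∧ v x = sphMax v ρ := by
  obtain ⟨x, hx, hvx⟩ := (isCompact_sphere (0 : Euc n) ρ).exists_sSup_image_eq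
    (NormedSpace.sphere_nonempty.2 hρ) hv
  exact ⟨x, mem_sphere_zero_iff_norm.1 hx, hvx.symm⟩

lemma exists_isLocalMax_of_sphMax_eq [NeZero n] (hr₁ : 0 ≤ r₁) (hr : r₁ < r₂)
    (hv : ContinuousOn v (Ann n r₁ r₂)) (hM : ∀ ρ ∈ Ioo r₁ r₂, sphMax v ρ = m) :
    ∃ x ∈ Ann n r₁ r₂, v x = m ∧ IsLocalMax v x := by
  have hsphere {ρ : ℝ} (hρ : ρ ∈ Ioo r₁ r₂) : ContinuousOn v (sphere 0 ρ) :=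
    hv.mono fun x hx ↦ by rwa [Ann, mem_ofPred_eq, mem_sphere_zero_iff_norm.1 hx]
  obtain ⟨ρ, hρ⟩ := exists_between hr
  obtain ⟨x₀, rfl, hvx₀⟩ := exists_norm_eq_and_eq_sphMax (hr₁.trans hρ.1.le) (hsphere hρ)
  rw [hM _ hρ] at hvx₀
  refine ⟨x₀, hρ, hvx₀, ?_⟩
  filter_upwards [(isOpen_Ann n r₁ r₂).mem_nhds hρ] with x hx
  exact (le_sphMax (hsphere hx)).trans_eq ((hM _ hx).trans hvx₀.symm)

end Sphere

theorem stmt_16_general {n : ℕ} {p C₁ C₂ α h : ℝ} (hp : 1 < p) (hC₁ : 0 < C₁) (hC₂ : 0 ≤ C₂)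
    (hα : 0 < α) {A : Euc n → Euc n → Euc n} (hA : StructCond A p C₁ C₂) {b : Euc n → ℝ}
    (hbm : Measurable b) (hb0 : ∀ x, 0 ≤ b x) (hbloc : LocBdd b) {U : Set (Euc n)}
    (hU : IsOpen U) {v : Euc n → ℝ} (hv : ContDiffOn ℝ 1 v U)
    (hsol : IsWeakSol A b α (indicator {x ∈ U | 0 < v x} fun _ ↦ h) U v) {x₀ : Euc n}
    (hx₀ : x₀ ∈ U) (hvx₀ : 0 < v x₀) (hmax : IsLocalMax v x₀) : h ≤ 0 := by
  refine hsol.nonpos_of_isLocalMax hA hp hC₁ hC₂ hα hbm hb0 hbloc hU hv hx₀ hmax ?_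
  filter_upwards [hU.mem_nhds hx₀,
    (hv.continuousOn.continuousAt (hU.mem_nhds hx₀)).eventually_const_lt hvx₀] with x hxU hvx
  exact indicator_of_mem (mem_sep hxU hvx) _

/-- Lemma 4.0: if a bounded nonnegative solution of
`div A(x,Dv) + b(x)|Dv|^α ≥ χ_ω h` in the annulus `B_{r₁,r₂}` (with `ω = {v > 0}`)
has constant sphere-maximum `M(ρ;v) = m > 0` for all `ρ ∈ (r₁, r₂)`, then `h = 0`. -/
theorem stmt_16 (n : ℕ) (hn : 2 ≤ n) (p C₁ C₂ α : ℝ) (hp : 1 < p)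
    (hC₁ : 0 < C₁) (hC₂ : 0 < C₂) (hα₁ : p - 1 ≤ α) (hα₂ : α ≤ p)
    (A : Euc n → Euc n → Euc n) (hA : StructCond A p C₁ C₂)
    (b : Euc n → ℝ) (hbm : Measurable b) (hb0 : ∀ x, 0 ≤ b x) (hbloc : LocBdd b)
    (r₁ r₂ h : ℝ) (hr₁ : 0 < r₁) (hr : r₁ < r₂) (hh : 0 ≤ h)
    (v : Euc n → ℝ) (hv1 : ContDiffOn ℝ 1 v (Ann n r₁ r₂))
    (hv0 : ∀ x ∈ Ann n r₁ r₂, 0 ≤ v x) (hvb : BddAbove (v '' Ann n r₁ r₂))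
    (hsol : IsWeakSol A b α
      (Set.indicator {x ∈ Ann n r₁ r₂ | 0 < v x} fun _ => h) (Ann n r₁ r₂) v)
    (m : ℝ) (hm : 0 < m) (hM : ∀ ρ ∈ Set.Ioo r₁ r₂, sphMax v ρ = m) :
    h = 0 := by
  have : NeZero n := ⟨by lia⟩
  obtain ⟨x₀, hx₀, rfl, hmax⟩ := exists_isLocalMax_of_sphMax_eq hr₁.le hr hv1.continuousOn hM
  exact (stmt_16_general hp hC₁ hC₂.le (by linarith) hA hbm hb0 hbloc (isOpen_Ann n r₁ r₂) hv1 hsol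
    hx₀ hm hmax).antisymm hh
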